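/- Let f be superquadratic on [0,∞). For i = 1,...,k, let x_{ij} ≥ 0 and p_{ij} > 0 (j = 1,...,n_i) with ∑_j p_{ij} = 1 for each i, and q_i > 0 with ∑_i q_i = 1. Set x̄ = ∑_i q_i ∑_j p_{ij} x_{ij}. Then ∑_{j_1,...,j_k} p_{1j_1}···p_{kj_k} f(∑_{i=1}^k q_i x_{i j_i}) - f(x̄) ≥ ∑_{j_1,...,j_k} p_{1j_1}···p_{kj_k} f(|∑_{i=1}^k q_i x_{i j_i} - x̄|). -/

import Mathlib

/-!
The products of the weights `p i` form a probability weight on the choice functions `t`, under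
which the coordinates `t i` are independent with marginals `p i`. Hence `∑ i, q i * x i (t i)` has
mean `∑ i, q i * ∑ j, p i j * x i j`, and Jensen's inequality for superquadratic functions applies
to this single weighted mean. Jensen's inequality itself is the average of the defining inequality
based at the mean, where the term with the coefficient `C` averages to zero.
-/

section ProductWeights

variable {R κ : Type*} [CommSemiring R] [Fintype κ] [DecidableEq κ]
  {ι : κ → Type*} [∀ i, Fintype (ι i)] {p : (i : κ) → ι i → R}

theorem sum_pi_prod_eq_one (hp1 : ∀ i, ∑ j, p i j = 1) :
    ∑ t : (i : κ) → ι i, ∏ i, p i (t i) = 1 := by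
  rw [← Fintype.prod_sum]
  exact Fintype.prod_eq_one _ hp1

theorem sum_pi_prod_mul_apply (hp1 : ∀ i, ∑ j, p i j = 1) (i : κ) (g : ι i → R) :
    ∑ t : (l : κ) → ι l, (∏ l, p l (t l)) * g (t i) = ∑ j, p i j * g j := by
  let e : (l : κ) → ι l → R := Function.update 1 i g
  have e_same : e i = g := by simp [e]
  have e_of_ne {l : κ} (hl : l ≠ i) : e l = 1 := by simp [e, hl]
  have prod_e (t : (l : κ) → ι l) : ∏ l, e l (t l) = g (t i) := by
    rw [Fintype.prod_eq_single i fun l hl => by rw [e_of_ne hl, Pi.one_apply], e_same]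
  -- The factor `g (t i)` is absorbed into the `i`-th weight, so that the sum factors again.
  calc ∑ t : (l : κ) → ι l, (∏ l, p l (t l)) * g (t i)
      = ∑ t : (l : κ) → ι l, ∏ l, p l (t l) * e l (t l) := by
        simp only [Finset.prod_mul_distrib, prod_e]
    _ = ∏ l, ∑ j, p l j * e l j := (Fintype.prod_sum fun l j => p l j * e l j).symm
    _ = ∑ j, p i j * e i j :=
        Fintype.prod_eq_single i fun l hl => by
          simp only [e_of_ne hl, Pi.one_apply, mul_one, hp1]
    _ = ∑ j, p i j * g j := by rw [e_same]

theorem sum_pi_prod_mul_sum (hp1 : ∀ i, ∑ j, p i j = 1) (g : (i : κ) → ι i → R) :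
    ∑ t : (i : κ) → ι i, (∏ i, p i (t i)) * ∑ i, g i (t i) = ∑ i, ∑ j, p i j * g i j := by
  simp only [Finset.mul_sum]
  rw [Finset.sum_comm]
  exact Finset.sum_congr rfl fun i _ => sum_pi_prod_mul_apply hp1 i (g i)

end ProductWeights

section Superquadratic

variable {R : Type*} [CommRing R] [LinearOrder R] {f : R → R}

/-- Superquadratic functions on the nonnegative half-line of an ordered ring, for which Jensen's
inequality holds with an extra term on the smaller side. Such a function is encoded as a function
on all of `R` whose values at negative arguments are arbitrary. -/
def IsSuperquadratic (f : R → R) : Prop :=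
  ∀ x, 0 ≤ x → ∃ C, ∀ y, 0 ≤ y → f |y - x| + C * (y - x) ≤ f y - f x

variable [IsOrderedRing R]

theorem IsSuperquadratic.sum_mul_map_abs_sub_le {τ : Type*} (hf : IsSuperquadratic f)
    {s : Finset τ} {w z : τ → R} {m : R} (hw : ∀ t ∈ s, 0 ≤ w t) (hw1 : ∑ t ∈ s, w t = 1)
    (hz : ∀ t ∈ s, 0 ≤ z t) (hm : ∑ t ∈ s, w t * z t = m) :
    ∑ t ∈ s, w t * f |z t - m| ≤ ∑ t ∈ s, w t * f (z t) - f m := by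
  have m_nonneg : 0 ≤ m := hm ▸ Finset.sum_nonneg fun t ht => mul_nonneg (hw t ht) (hz t ht)
  obtain ⟨C, hC⟩ := hf m m_nonneg
  have sum_mul_sub (h : τ → R) (c : R) :
      ∑ t ∈ s, w t * (h t - c) = ∑ t ∈ s, w t * h t - c := by
    simp only [mul_sub, Finset.sum_sub_distrib, ← Finset.sum_mul, hw1, one_mul]
  have linear_term_eq_zero : ∑ t ∈ s, w t * (C * (z t - m)) = 0 := by
    simp only [mul_left_comm _ C, ← Finset.mul_sum, sum_mul_sub, hm, sub_self, mul_zero]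
  calc ∑ t ∈ s, w t * f |z t - m|
      = ∑ t ∈ s, w t * (f |z t - m| + C * (z t - m)) := by
        simp only [mul_add, Finset.sum_add_distrib, linear_term_eq_zero, add_zero]
    _ ≤ ∑ t ∈ s, w t * (f (z t) - f m) :=
        Finset.sum_le_sum fun t ht => mul_le_mul_of_nonneg_left (hC _ (hz t ht)) (hw t ht)
    _ = ∑ t ∈ s, w t * f (z t) - f m := sum_mul_sub _ _

theorem generalized_jensen_superquadratic_general (hf : IsSuperquadratic f)
    {κ : Type*} [Fintype κ] [DecidableEq κ] {ι : κ → Type*} [∀ i, Fintype (ι i)]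
    {x p : (i : κ) → ι i → R} {q : κ → R}
    (hx : ∀ i j, 0 ≤ x i j) (hp : ∀ i j, 0 ≤ p i j) (hp1 : ∀ i, ∑ j, p i j = 1)
    (hq : ∀ i, 0 ≤ q i) :
    let xbar := ∑ i, q i * ∑ j, p i j * x i j
    ∑ t : (i : κ) → ι i, (∏ i, p i (t i)) * f |∑ i, q i * x i (t i) - xbar| ≤
      ∑ t : (i : κ) → ι i, (∏ i, p i (t i)) * f (∑ i, q i * x i (t i)) - f xbar := by
  intro xbar
  have mean_eq : ∑ t : (i : κ) → ι i, (∏ i, p i (t i)) * ∑ i, q i * x i (t i) = xbar := by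
    rw [sum_pi_prod_mul_sum hp1 fun i j => q i * x i j]
    simp only [xbar, Finset.mul_sum, mul_left_comm]
  exact hf.sum_mul_map_abs_sub_le
    (fun t _ => Finset.prod_nonneg fun i _ => hp i (t i)) (sum_pi_prod_eq_one hp1)
    (fun t _ => Finset.sum_nonneg fun i _ => mul_nonneg (hq i) (hx i (t i))) mean_eq

end Superquadratic

theorem generalized_jensen_superquadratic (f : ℝ → ℝ)
    (hf : ∀ x ≥ (0:ℝ), ∃ C : ℝ, ∀ y ≥ (0:ℝ), f y - f x ≥ f |y - x| + C * (y - x))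
    (k : ℕ) (ι : Fin k → Type*) [∀ i, Fintype (ι i)]
    (x p : (i : Fin k) → ι i → ℝ) (q : Fin k → ℝ)
    (hx : ∀ i j, 0 ≤ x i j) (hp : ∀ i j, 0 < p i j)
    (hp1 : ∀ i, ∑ j, p i j = 1)
    (hq : ∀ i, 0 < q i) (hq1 : ∑ i, q i = 1) :
    let xbar := ∑ i, q i * ∑ j, p i j * x i j
    (∑ t : (i : Fin k) → ι i, (∏ i, p i (t i)) * f (∑ i, q i * x i (t i))) - f xbar ≥
      ∑ t : (i : Fin k) → ι i, (∏ i, p i (t i)) *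
        f |(∑ i, q i * x i (t i)) - xbar| :=
  generalized_jensen_superquadratic_general (f := f) hf hx (fun i j => (hp i j).le) hp1
    fun i => (hq i).le
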